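/- Let L be a modular ortholattice and c₀ ≤ c₃ with c₁, c₂ ∈ [c₀, c₃]. Define d₁ = ((c₁ ∧ c₂)' ∧ c₁) ∨ c₀ (the relative orthocomplement of c₁ ∧ c₂ in [c₀, c₁]) and e = ((c₁ ∨ c₂)' ∧ c₃) ∨ d₁ (the relative orthocomplement of c₁ ∨ c₂ in [d₁, c₃]). Then e is a complement of c₂ in the interval [c₀, c₃], i.e., e ∧ c₂ = c₀ and e ∨ c₂ = c₃; moreover, if c₁ is itself a complement of c₂ in [c₀, c₃], then e = c₁. -/

import Mathlib

/-- An ortholattice: a bounded lattice with an order-reversing involution `x ↦ x′`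
satisfying `x ⊓ x′ = ⊥` and `x ⊔ x′ = ⊤`. -/
class Ortholattice (α : Type*) extends Lattice α, BoundedOrder α where
  compl : α → α
  compl_antitone : ∀ x y : α, x ≤ y → compl y ≤ compl x
  compl_compl : ∀ x : α, compl (compl x) = x
  inf_compl : ∀ x : α, x ⊓ compl x = ⊥
  sup_compl : ∀ x : α, x ⊔ compl x = ⊤

postfix:max "′" => Ortholattice.compl

theorem relOC {α : Type*} [Ortholattice α] [IsModularLattice α] (b x c : α)
    (hb : b ≤ x) (hc : x ≤ c) :
    ((x′ ⊓ c) ⊔ b) ⊓ x = b ∧ ((x′ ⊓ c) ⊔ b) ⊔ x = c := by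
  constructor
  · rw [sup_comm, sup_inf_assoc_of_le _ hb, inf_right_comm, inf_comm (x′) x,
      Ortholattice.inf_compl]
    simp
  · rw [sup_assoc, sup_eq_right.2 hb, sup_comm, ← sup_inf_assoc_of_le _ hc,
      Ortholattice.sup_compl]
    simp

/-- Let `L` be a modular ortholattice, `c₀ ≤ c₃`, and `c₁, c₂ ∈ [c₀, c₃]`.  With
`d₁ = ((c₁ ⊓ c₂)′ ⊓ c₁) ⊔ c₀` (the relative orthocomplement of `c₁ ⊓ c₂` in `[c₀, c₁]`)
and `e = ((c₁ ⊔ c₂)′ ⊓ c₃) ⊔ d₁` (the relative orthocomplement of `c₁ ⊔ c₂` in `[d₁, c₃]`),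
`e` is a complement of `c₂` in `[c₀, c₃]`; moreover if `c₁` is itself a complement of `c₂`
in `[c₀, c₃]` then `e = c₁`. -/
theorem stmt7 {α : Type*} [Ortholattice α] [IsModularLattice α]
    (c₀ c₁ c₂ c₃ : α) (h03 : c₀ ≤ c₃)
    (h01 : c₀ ≤ c₁) (h13 : c₁ ≤ c₃) (h02 : c₀ ≤ c₂) (h23 : c₂ ≤ c₃)
    (d₁ e : α)
    (hd₁ : d₁ = ((c₁ ⊓ c₂)′ ⊓ c₁) ⊔ c₀)
    (he : e = ((c₁ ⊔ c₂)′ ⊓ c₃) ⊔ d₁) :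
    (c₀ ≤ e ∧ e ≤ c₃) ∧ e ⊓ c₂ = c₀ ∧ e ⊔ c₂ = c₃ ∧
    (c₁ ⊓ c₂ = c₀ → c₁ ⊔ c₂ = c₃ → e = c₁) := by
  obtain ⟨p1, p2⟩ := relOC c₀ (c₁ ⊓ c₂) c₁ (le_inf h01 h02) inf_le_left
  rw [← hd₁] at p1 p2
  have hd1 : d₁ ≤ c₁ := le_sup_left.trans p2.le
  have h0d : c₀ ≤ d₁ := hd₁ ▸ le_sup_right
  obtain ⟨q1, q2⟩ := relOC d₁ (c₁ ⊔ c₂) c₃ (hd1.trans le_sup_left) (sup_le h13 h23)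
  rw [← he] at q1 q2
  have hde : d₁ ≤ e := he ▸ le_sup_right
  have he3 : e ≤ c₃ := le_sup_left.trans q2.le
  refine ⟨⟨h0d.trans hde, he3⟩, ?_, ?_, ?_⟩
  · apply le_antisymm _ (le_inf (h0d.trans hde) h02)
    have h1 : e ⊓ c₂ ≤ d₁ := by
      rw [← q1]; exact inf_le_inf_left _ le_sup_right
    rw [← p1]
    exact le_inf h1 (le_inf (h1.trans hd1) inf_le_right)
  · apply le_antisymm (sup_le he3 h23)
    have h1 : c₁ ≤ e ⊔ c₂ := by
      rw [← p2]; exact sup_le_sup hde inf_le_right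
    rw [← q2]
    exact sup_le le_sup_left (sup_le h1 le_sup_right)
  · intro ha hs
    rw [ha, sup_eq_left.2 h0d] at p2
    rw [hs, inf_eq_left.2 he3] at q1
    exact q1.trans p2
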